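/- arXiv:2201.11329 — 4 statements merged into one kernel-verified Lean document; each statement's English description precedes it below -/
import Mathlib

section
/- Let A_j ∈ ℂ^{2^s×2^s} for 0 ≤ j < m and y ∈ ℂ^m with ‖y‖₁ ≤ β, and set A = Σ_{j<m} y_j A_j. Let (P_L,P_R) be a (β,n,ε₁)-state-preparation-pair for y (so m ≤ 2^n). For each j < m let U_j be a unitary on ℂ^{2^a}⊗ℂ^{2^s} that is an (α,a,ε₂)-block-encoding of A_j, and define the unitary W = Σ_{j<m} |j⟩⟨j|⊗U_j + (I_{2^n} − Σ_{j<m}|j⟩⟨j|)⊗I_{2^{a+s}} on ℂ^{2^n}⊗ℂ^{2^a}⊗ℂ^{2^s}. Then W̃ = (P_L†⊗I_{2^{a+s}}) W (P_R⊗I_{2^{a+s}}) is an (αβ, a+n, αε₁+βε₂)-block-encoding of A. -/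
/-!
Write `B j` for the top-left block of `U j` and `w j = conj (PL j 0) * PR j 0`. Since the controlled
unitary is block diagonal in the first register, the top-left block of the product is
`∑ j, w j • B j`, the indices `j ≥ m` contributing nothing because `w j = 0` there
(`sum_weights`). Then

  `∑ y j • A j - αβ ∑ w j • B j = ∑ y j • (A j - α B j) + ∑ (α (y j - β w j)) • B j`,

and the triangle inequality bounds the two sums by `β ε₂` and `α ε₁`, using `‖B j‖ ≤ 1`
(a block of a unitary is a contraction, `norm_block_le_one`).
-/

open Matrix

/-- Spectral norm (ℓ²→ℓ² operator norm) of a matrix. -/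
noncomputable def specNorm {𝕜 : Type*} [RCLike 𝕜] {m n : Type*} [Fintype m] [Fintype n]
    [DecidableEq n] (A : Matrix m n 𝕜) : ℝ :=
  ‖LinearMap.toContinuousLinearMap (Matrix.toEuclideanLin A)‖

/-- A matrix is unitary. -/
def IsUnitary {n : Type*} [Fintype n] [DecidableEq n] (U : Matrix n n ℂ) : Prop :=
  Uᴴ * U = 1 ∧ U * Uᴴ = 1

/-- `U` is an `(α, anc, ε)`-block-encoding of `A`. -/
noncomputable def IsBlockEncoding {anc sys : Type*} [Fintype anc] [Fintype sys]
    [DecidableEq sys] [Zero anc] (α ε : ℝ)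
    (U : Matrix (anc × sys) (anc × sys) ℂ) (A : Matrix sys sys ℂ) : Prop :=
  specNorm (A - (α : ℂ) • Matrix.of fun i j => U (0, i) (0, j)) ≤ ε

open scoped Matrix.Norms.L2Operator

lemma specNorm_eq_norm {m n : Type*} [Fintype m] [Fintype n] [DecidableEq n]
    (A : Matrix m n ℂ) : specNorm A = ‖A‖ := rfl

/-- A matrix with orthonormal columns is a contraction, by the C⋆-identity. -/
lemma norm_le_one_of_isometry {m n : Type*} [Fintype m] [Fintype n] [DecidableEq m]
    [DecidableEq n] {V : Matrix m n ℂ} (hV : Vᴴ * V = 1) : ‖V‖ ≤ 1 := by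
  have h1 : ‖(1 : Matrix n n ℂ)‖ ≤ 1 := by
    have h := Matrix.l2_opNorm_conjTranspose_mul_self (1 : Matrix n n ℂ)
    rw [conjTranspose_one, one_mul] at h
    by_contra! hlt
    nlinarith
  have h := Matrix.l2_opNorm_conjTranspose_mul_self V
  rw [hV] at h
  nlinarith [norm_nonneg V]

/-- The top-left block of a unitary is `Vᴴ * U * V` for the isometry `V = |0⟩ ⊗ I`. -/
lemma norm_block_le_one {anc sys : Type*} [Fintype anc] [Fintype sys] [DecidableEq anc]
    [DecidableEq sys] [Zero anc] {U : Matrix (anc × sys) (anc × sys) ℂ} (hU : IsUnitary U) :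
    ‖(Matrix.of fun i j => U (0, i) (0, j) : Matrix sys sys ℂ)‖ ≤ 1 := by
  let V : Matrix (anc × sys) sys ℂ := (1 : Matrix (anc × sys) (anc × sys) ℂ).submatrix id (0, ·)
  have hV : Vᴴ * V = 1 := by
    ext i j
    simp [V, Matrix.mul_apply, Matrix.one_apply]
  have hB : (Matrix.of fun i j => U (0, i) (0, j) : Matrix sys sys ℂ) = Vᴴ * (U * V) := by
    ext i j
    simp [V, Matrix.mul_apply, Matrix.one_apply]
  have hVn := norm_le_one_of_isometry hV
  rw [hB]
  calc ‖Vᴴ * (U * V)‖ ≤ ‖Vᴴ‖ * (‖U‖ * ‖V‖) :=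
        (Matrix.l2_opNorm_mul _ _).trans
          (mul_le_mul_of_nonneg_left (Matrix.l2_opNorm_mul _ _) (norm_nonneg _))
    _ ≤ 1 * (1 * 1) := by
        rw [Matrix.l2_opNorm_conjTranspose]
        have := norm_le_one_of_isometry hU.1
        gcongr
    _ = 1 := by norm_num

/-- A sum over `Fin N` whose terms vanish from index `m` on is a sum over `Fin m`. -/
lemma sum_weights {N m : ℕ} (hm : m ≤ N) (w : Fin N → ℂ) (hw : ∀ j : Fin N, m ≤ (j : ℕ) → w j = 0)
    (f : Fin m → ℂ) (c : ℂ) :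
    ∑ k : Fin N, w k * (if h : (k : ℕ) < m then f ⟨k, h⟩ else c)
      = ∑ j : Fin m, w (Fin.castLE hm j) * f j := by
  symm
  refine Finset.sum_of_injOn (Fin.castLE hm) (Fin.castLE_injective hm).injOn (by simp) ?_ ?_
  · intro k _ hk
    have hmk : m ≤ (k : ℕ) := by
      by_contra! hlt
      exact hk ⟨⟨k, hlt⟩, by simp, rfl⟩
    rw [hw k hmk, zero_mul]
  · intro j _
    simp

/-- linear combination of block-encoded matrices via a state-preparation pair.
`W̃ = (P_L† ⊗ I) W (P_R ⊗ I)` is an `(αβ, a+n, αε₁+βε₂)`-block-encoding of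
`A = Σ_j y_j A_j`. -/
theorem linear_combination_of_block_encodings (s a n m : ℕ) (hm : m ≤ 2 ^ n)
    (α β ε₁ ε₂ : ℝ) (hα : 0 ≤ α) (hβ : 0 ≤ β) (hε₁ : 0 ≤ ε₁) (hε₂ : 0 ≤ ε₂)
    (y : Fin m → ℂ) (hy : ∑ j, ‖y j‖ ≤ β)
    (A : Fin m → Matrix (Fin (2 ^ s)) (Fin (2 ^ s)) ℂ)
    (U : Fin m → Matrix (Fin (2 ^ a) × Fin (2 ^ s)) (Fin (2 ^ a) × Fin (2 ^ s)) ℂ)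
    (hUuni : ∀ j, IsUnitary (U j))
    (hUbe : ∀ j, IsBlockEncoding α ε₂ (U j) (A j))
    (PL PR : Matrix (Fin (2 ^ n)) (Fin (2 ^ n)) ℂ)
    (hPL : IsUnitary PL) (hPR : IsUnitary PR)
    (hprep1 : ∑ j : Fin m,
        ‖(β : ℂ) * (starRingEnd ℂ) (PL (Fin.castLE hm j) 0) * PR (Fin.castLE hm j) 0 - y j‖
        ≤ ε₁)
    (hprep2 : ∀ j : Fin (2 ^ n), m ≤ (j : ℕ) →
        (starRingEnd ℂ) (PL j 0) * PR j 0 = 0) :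
    IsBlockEncoding (α * β) (α * ε₁ + β * ε₂)
      ((Matrix.of fun (p q : (Fin (2 ^ n) × Fin (2 ^ a)) × Fin (2 ^ s)) =>
          (starRingEnd ℂ) (PL q.1.1 p.1.1) *
            (if p.1.2 = q.1.2 ∧ p.2 = q.2 then 1 else 0)) *
        (Matrix.of fun (p q : (Fin (2 ^ n) × Fin (2 ^ a)) × Fin (2 ^ s)) =>
          if p.1.1 = q.1.1 then
            (if h : (p.1.1 : ℕ) < m then U ⟨(p.1.1 : ℕ), h⟩ (p.1.2, p.2) (q.1.2, q.2)
             else if p.1.2 = q.1.2 ∧ p.2 = q.2 then 1 else 0)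
          else 0) *
        (Matrix.of fun (p q : (Fin (2 ^ n) × Fin (2 ^ a)) × Fin (2 ^ s)) =>
          PR p.1.1 q.1.1 * (if p.1.2 = q.1.2 ∧ p.2 = q.2 then 1 else 0)))
      (∑ j, y j • A j) := by
  set B : Fin m → Matrix (Fin (2 ^ s)) (Fin (2 ^ s)) ℂ :=
    fun j => Matrix.of fun i k => U j (0, i) (0, k) with hB
  set w : Fin m → ℂ := fun j =>
    (starRingEnd ℂ) (PL (Fin.castLE hm j) 0) * PR (Fin.castLE hm j) 0 with hw
  have hBn : ∀ j, ‖B j‖ ≤ 1 := fun j => norm_block_le_one (hUuni j)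
  have hAB : ∀ j, ‖A j - (α : ℂ) • B j‖ ≤ ε₂ := fun j => hUbe j
  unfold IsBlockEncoding
  rw [specNorm_eq_norm]
  have hblock : ∀ M : Matrix (Fin (2 ^ s)) (Fin (2 ^ s)) ℂ, M = ∑ j, w j • B j →
      ‖∑ j, y j • A j - ((α * β : ℝ) : ℂ) • M‖ ≤ α * ε₁ + β * ε₂ := by
    rintro M rfl
    have hsplit : ∑ j, y j • A j - ((α * β : ℝ) : ℂ) • ∑ j, w j • B j
        = ∑ j, ((α : ℂ) * (y j - β * w j)) • B j + ∑ j, y j • (A j - (α : ℂ) • B j) := by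
      rw [Finset.smul_sum, ← Finset.sum_sub_distrib, ← Finset.sum_add_distrib]
      refine Finset.sum_congr rfl fun j _ => ?_
      push_cast
      module
    rw [hsplit]
    refine (norm_add_le _ _).trans (add_le_add ?_ ?_)
    · calc ‖∑ j, ((α : ℂ) * (y j - β * w j)) • B j‖
          ≤ ∑ j, α * ‖(β : ℂ) * (starRingEnd ℂ) (PL (Fin.castLE hm j) 0) *
              PR (Fin.castLE hm j) 0 - y j‖ := by
            refine norm_sum_le_of_le _ fun j _ => ?_
            rw [norm_smul, norm_mul, Complex.norm_real, Real.norm_of_nonneg hα, norm_sub_rev,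
              mul_assoc (β : ℂ)]
            exact mul_le_of_le_one_right (by positivity) (hBn j)
        _ ≤ α * ε₁ := by
            rw [← Finset.mul_sum]
            gcongr
    · calc ‖∑ j, y j • (A j - (α : ℂ) • B j)‖ ≤ ∑ j, ‖y j‖ * ε₂ := by
            refine norm_sum_le_of_le _ fun j _ => ?_
            rw [norm_smul]
            exact mul_le_mul_of_nonneg_left (hAB j) (norm_nonneg _)
        _ ≤ β * ε₂ := by
            rw [← Finset.sum_mul]
            gcongr
  apply hblock
  ext i k
  have key := sum_weights hm (fun j => (starRingEnd ℂ) (PL j 0) * PR j 0) hprep2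
    (fun j => B j i k) (if i = k then 1 else 0)
  simp only [Matrix.sum_apply, Matrix.smul_apply, smul_eq_mul]
  rw [← key]
  -- Expanding both products, the Kronecker deltas collapse every sum except that over the
  -- control register.
  simp [Matrix.mul_apply, Fintype.sum_prod_type, ite_and, hB]
  refine Finset.sum_congr rfl fun x _ => ?_
  split_ifs <;> ring
end

section
/- Let B : {0,…,R−1}×{0,…,R−1} → ℂ^{M×M} be a family of matrix blocks such that for every row index i there are at most d_r indices j with B_{ij} ≠ 0, and for every column index j there are at most d_c indices i with B_{ij} ≠ 0. Then the RM×RM block matrix Σ_{i,j} |i⟩⟨j| ⊗ B_{ij} satisfies ‖Σ_{i,j} |i⟩⟨j| ⊗ B_{ij}‖ ≤ √(d_r d_c) · max_{i,j} ‖B_{ij}‖. -/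
/-!
Write a vector `x` as a family of blocks `x_j`, so that the `i`-th block of the image is
`∑_j B_{ij} x_j`. This sum has at most `d_r` nonzero terms, so Cauchy–Schwarz bounds its squared
norm by `d_r c² ∑_{j : B_{ij} ≠ 0} ‖x_j‖²` (`sq_norm_blockRow_le`). Summing over `i` and exchanging
the sums, every `‖x_j‖²` is counted at most `d_c` times, whence `‖A x‖² ≤ d_r d_c c² ‖x‖²`.
-/

open Matrix

/-- Cauchy–Schwarz on the support of a block row. -/
lemma sq_norm_blockRow_le {R M d : ℕ} (T : Fin R → Matrix (Fin M) (Fin M) ℂ)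
    (hT : {j : Fin R | T j ≠ 0}.ncard ≤ d) {c : ℝ} (hTc : ∀ j, specNorm (T j) ≤ c)
    (y : Fin R → EuclideanSpace ℂ (Fin M)) :
    ‖∑ j, Matrix.toEuclideanLin (T j) (y j)‖ ^ 2 ≤
      d * ∑ j, if T j ≠ 0 then c ^ 2 * ‖y j‖ ^ 2 else 0 := by
  classical
  set S : Finset (Fin R) := Finset.univ.filter fun j => T j ≠ 0 with hS
  have hcard : (S.card : ℝ) ≤ d := by
    have h : {j : Fin R | T j ≠ 0} = (S : Set (Fin R)) := by ext; simp [hS]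
    rw [h, Set.ncard_coe_finset] at hT
    exact_mod_cast hT
  have hsum : ∑ j, Matrix.toEuclideanLin (T j) (y j) =
      ∑ j ∈ S, Matrix.toEuclideanLin (T j) (y j) := by
    symm
    apply Finset.sum_subset (Finset.subset_univ _)
    intro j _ hj
    have h0 : T j = 0 := by simpa [hS] using hj
    simp [h0]
  have hterm : ∀ j, ‖Matrix.toEuclideanLin (T j) (y j)‖ ≤ c * ‖y j‖ := fun j =>
    (LinearMap.toContinuousLinearMap (Matrix.toEuclideanLin (T j))).le_of_opNorm_le (hTc j) (y j)
  rw [hsum, ← Finset.sum_filter]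
  calc ‖∑ j ∈ S, Matrix.toEuclideanLin (T j) (y j)‖ ^ 2
      ≤ (∑ j ∈ S, c * ‖y j‖) ^ 2 := by
        gcongr
        exact norm_sum_le_of_le _ fun j _ => hterm j
    _ ≤ S.card * ∑ j ∈ S, (c * ‖y j‖) ^ 2 := sq_sum_le_card_mul_sum_sq
    _ ≤ d * ∑ j ∈ S, (c * ‖y j‖) ^ 2 := by
        gcongr
    _ = d * ∑ j ∈ S, c ^ 2 * ‖y j‖ ^ 2 := by simp only [mul_pow]

/-- a block matrix with at most `d_r` nonzero blocks in every block-row and at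
most `d_c` nonzero blocks in every block-column has spectral norm at most
`√(d_r d_c) · max_{i,j} ‖B_{ij}‖` (where `c` is any common upper bound on the block norms,
in particular their maximum). -/
theorem block_sparse_norm_bound (R M : ℕ) (d_r d_c : ℕ)
    (B : Fin R → Fin R → Matrix (Fin M) (Fin M) ℂ)
    (hrow : ∀ i : Fin R, {j : Fin R | B i j ≠ 0}.ncard ≤ d_r)
    (hcol : ∀ j : Fin R, {i : Fin R | B i j ≠ 0}.ncard ≤ d_c)
    (c : ℝ) (hc : 0 ≤ c) (hBc : ∀ i j, specNorm (B i j) ≤ c) :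
    specNorm (Matrix.of fun (p q : Fin R × Fin M) => B p.1 q.1 p.2 q.2) ≤
      Real.sqrt ((d_r : ℝ) * d_c) * c := by
  classical
  apply ContinuousLinearMap.opNorm_le_bound _ (by positivity)
  intro x
  set y : Fin R → EuclideanSpace ℂ (Fin M) := fun j => WithLp.toLp 2 fun a => x (j, a) with hy
  have hx : ‖x‖ ^ 2 = ∑ j, ‖y j‖ ^ 2 := by
    simp only [EuclideanSpace.norm_sq_eq, hy, Fintype.sum_prod_type]
  have hAx : ‖Matrix.toEuclideanLin
      (Matrix.of fun (p q : Fin R × Fin M) => B p.1 q.1 p.2 q.2) x‖ ^ 2 =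
      ∑ i, ‖∑ j, Matrix.toEuclideanLin (B i j) (y j)‖ ^ 2 := by
    simp only [EuclideanSpace.norm_sq_eq, Fintype.sum_prod_type, hy]
    refine Finset.sum_congr rfl fun i _ => Finset.sum_congr rfl fun a _ => ?_
    congr 2
    simp [Matrix.toLpLin_apply, Matrix.mulVec, dotProduct, Fintype.sum_prod_type]
  have hcount : ∀ j, (∑ i, if B i j ≠ 0 then c ^ 2 * ‖y j‖ ^ 2 else 0) ≤
      d_c * (c ^ 2 * ‖y j‖ ^ 2) := by
    intro j
    rw [← Finset.sum_filter, Finset.sum_const, nsmul_eq_mul]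
    have h : {i : Fin R | B i j ≠ 0} =
        ((Finset.univ.filter fun i => B i j ≠ 0 : Finset (Fin R)) : Set (Fin R)) := by
      ext; simp
    have h' := hcol j
    rw [h, Set.ncard_coe_finset] at h'
    gcongr
  have key : ‖Matrix.toEuclideanLin
      (Matrix.of fun (p q : Fin R × Fin M) => B p.1 q.1 p.2 q.2) x‖ ^ 2 ≤
      (Real.sqrt ((d_r : ℝ) * d_c) * c * ‖x‖) ^ 2 := by
    rw [hAx, mul_pow, mul_pow, Real.sq_sqrt (by positivity), hx]
    calc ∑ i, ‖∑ j, Matrix.toEuclideanLin (B i j) (y j)‖ ^ 2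
        ≤ ∑ i, d_r * ∑ j, (if B i j ≠ 0 then c ^ 2 * ‖y j‖ ^ 2 else 0) :=
          Finset.sum_le_sum fun i _ => by
            convert sq_norm_blockRow_le (B i) (hrow i) (hBc i) y
      _ = d_r * ∑ j, ∑ i, (if B i j ≠ 0 then c ^ 2 * ‖y j‖ ^ 2 else 0) := by
          rw [← Finset.mul_sum, Finset.sum_comm]
      _ ≤ d_r * ∑ j, d_c * (c ^ 2 * ‖y j‖ ^ 2) := by
          gcongr with j _
          exact hcount j
      _ = (d_r : ℝ) * d_c * c ^ 2 * ∑ j, ‖y j‖ ^ 2 := by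
          simp only [← Finset.mul_sum]
          ring
  exact le_of_abs_le (abs_le_of_sq_le_sq key (by positivity))
end

section
/- Fix an integer N ≥ 2 and a real 0 ≤ C ≤ 1. Let K ∈ ℝ^{N×N} be the kernel matrix with entries K_{ij} = |i−j|^{−1} for i ≠ j (indices 0 ≤ i,j ≤ N−1) and K_{ii} = C. Then the spectral norm of K satisfies ‖K‖ ≥ ln N. -/
/-!
The bound comes from testing `K` on the all-ones vector `𝟙`: since `‖𝟙‖² = N`, one has
`⟪𝟙, K 𝟙⟫ ≤ N ‖K‖`. Writing `H_N` for the `N`-th harmonic number, the off-diagonal entries of `K`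
sum to `2 N (H_N - 1)` and the diagonal contributes `N C ≥ 0`, so `‖K‖ ≥ 2 (H_N - 1)`.
Finally `log N ≤ 2 (H_N - 1)` by induction, because
`log (N + 1) - log N ≤ 1 / N ≤ 2 / (N + 1)` for `N ≥ 1`.
-/

open Matrix

/-- The diagonal terms of the double sum vanish, since `|0|⁻¹ = 0` in Lean. -/
lemma sum_sum_abs_sub_inv (N : ℕ) :
    ∑ i ∈ Finset.range N, ∑ j ∈ Finset.range N, |(i : ℝ) - (j : ℝ)|⁻¹
      = 2 * N * (∑ k ∈ Finset.range N, ((k : ℝ) + 1)⁻¹ - 1) := by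
  induction N with
  | zero => simp
  | succ N ih =>
    -- The new row and the new column each contribute `H_N`.
    have hrow : ∑ j ∈ Finset.range N, |(N : ℝ) - (j : ℝ)|⁻¹
        = ∑ k ∈ Finset.range N, ((k : ℝ) + 1)⁻¹ := by
      rw [← Finset.sum_range_reflect]
      refine Finset.sum_congr rfl fun j hj => ?_
      have hj' : j + 1 ≤ N := Finset.mem_range.mp hj
      have hcast : ((N - 1 - j : ℕ) : ℝ) = N - 1 - j := by
        rw [Nat.sub_sub, Nat.cast_sub (by omega)]
        push_cast
        ring
      rw [hcast, show (N : ℝ) - (N - 1 - j) = j + 1 by ring, abs_of_pos (by positivity)]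
    have hcol : ∑ i ∈ Finset.range N, |(i : ℝ) - (N : ℝ)|⁻¹
        = ∑ k ∈ Finset.range N, ((k : ℝ) + 1)⁻¹ := by
      rw [← hrow]
      exact Finset.sum_congr rfl fun i _ => by rw [abs_sub_comm]
    simp only [Finset.sum_range_succ, Finset.sum_add_distrib, ih, hrow, hcol]
    have hne : (N : ℝ) + 1 ≠ 0 := by positivity
    push_cast
    simp only [sub_self, abs_zero, _root_.inv_zero]
    field_simp
    ring

lemma log_le_two_mul_harmonic_sub_one (N : ℕ) (hN : 1 ≤ N) :
    Real.log N ≤ 2 * (∑ k ∈ Finset.range N, ((k : ℝ) + 1)⁻¹ - 1) := by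
  induction N, hN using Nat.le_induction with
  | base => simp
  | succ N hN ih =>
    have hN1 : (1 : ℝ) ≤ N := by exact_mod_cast hN
    have hN0 : (0 : ℝ) < N := by linarith
    have hlog : Real.log (N + 1) - Real.log N ≤ 1 / N := by
      rw [← Real.log_div (by positivity) (by positivity)]
      refine (Real.log_le_sub_one_of_pos (by positivity)).trans (le_of_eq ?_)
      field_simp
      ring
    have hfrac : 1 / (N : ℝ) ≤ 2 * ((N : ℝ) + 1)⁻¹ := by
      rw [← div_eq_mul_inv, div_le_div_iff₀ hN0 (by positivity)]
      linarith
    rw [Finset.sum_range_succ]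
    push_cast
    linarith

/-- The Rayleigh-quotient bound `⟪𝟙, A 𝟙⟫ ≤ ‖𝟙‖² ‖A‖`. -/
lemma sum_entries_le_card_mul_specNorm {N : ℕ} (A : Matrix (Fin N) (Fin N) ℝ) :
    ∑ i, ∑ j, A i j ≤ N * specNorm A := by
  set T := LinearMap.toContinuousLinearMap (Matrix.toEuclideanLin A) with hT
  set v : EuclideanSpace ℝ (Fin N) := WithLp.toLp 2 (fun _ => 1) with hv
  have hnorm : ‖v‖ * ‖v‖ = N := by
    rw [← sq, EuclideanSpace.norm_sq_eq]
    simp [hv]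
  have hinner : inner ℝ v (T v) = ∑ i, ∑ j, A i j := by
    simp [hv, hT, PiLp.inner_apply, Matrix.mulVec, dotProduct, Matrix.toLpLin_apply]
  calc ∑ i, ∑ j, A i j = inner ℝ v (T v) := hinner.symm
    _ ≤ ‖v‖ * ‖T v‖ := real_inner_le_norm _ _
    _ ≤ ‖v‖ * (‖T‖ * ‖v‖) := by gcongr; exact T.le_opNorm v
    _ = ‖v‖ * ‖v‖ * ‖T‖ := by ring
    _ = N * specNorm A := by rw [hnorm]; rfl

/-- the kernel matrix of the kernel `|x−x'|^{−1}` on `N` uniformly spaced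
points, with self-interaction constant `C`, has spectral norm at least `ln N`. -/
theorem poly_kernel_norm_lower_bound_p_one (N : ℕ) (hN : 2 ≤ N)
    (C : ℝ) (hC0 : 0 ≤ C) (hC1 : C ≤ 1)
    (K : Matrix (Fin N) (Fin N) ℝ)
    (hK : K = Matrix.of fun i j : Fin N =>
      if i = j then C else |(i : ℝ) - (j : ℝ)|⁻¹) :
    Real.log N ≤ specNorm K := by
  have hN0 : (0 : ℝ) < N := by exact_mod_cast (by omega : 0 < N)
  have hentries : ∑ i : Fin N, ∑ j : Fin N, |(i : ℝ) - (j : ℝ)|⁻¹ ≤ ∑ i, ∑ j, K i j := by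
    refine Finset.sum_le_sum fun i _ => Finset.sum_le_sum fun j _ => ?_
    rw [hK, Matrix.of_apply]
    split_ifs with h
    · simpa [h] using hC0
    · exact le_rfl
  have hsum : ∑ i : Fin N, ∑ j : Fin N, |(i : ℝ) - (j : ℝ)|⁻¹
      = 2 * N * (∑ k ∈ Finset.range N, ((k : ℝ) + 1)⁻¹ - 1) := by
    rw [← sum_sum_abs_sub_inv]
    simp only [Finset.sum_range]
  have hlog := log_le_two_mul_harmonic_sub_one N (by omega)
  have hspec := sum_entries_le_card_mul_specNorm K
  refine le_of_mul_le_mul_left ?_ hN0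
  calc (N : ℝ) * Real.log N
      ≤ N * (2 * (∑ k ∈ Finset.range N, ((k : ℝ) + 1)⁻¹ - 1)) := by gcongr
    _ = ∑ i : Fin N, ∑ j : Fin N, |(i : ℝ) - (j : ℝ)|⁻¹ := by rw [hsum]; ring
    _ ≤ N * specNorm K := hentries.trans hspec
end

section
/- Let ℓ ∈ ℕ and fix (I₁,I₂) ∈ {0,…,2^ℓ−1}². The number of pairs (J₁,J₂) ∈ {0,…,2^ℓ−1}² satisfying max(|I₁−J₁|, |I₂−J₂|) ≥ 2 and max(|⌊I₁/2⌋−⌊J₁/2⌋|, |⌊I₂/2⌋−⌊J₂/2⌋|) ≤ 1 is at most 27 (= 6² − 3²). -/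
/-!
Embed the clusters into `ℤ²`, so that clusters near the boundary of the grid need no special
treatment. In one coordinate, the indices whose parent is within distance `1` of the parent of `I`
form an interval of `6` integers, the children of three consecutive parents, and this interval
contains the `3` integers within distance `1` of `I`. A newly admissible cluster therefore lies in
a `6 × 6` box but outside a `3 × 3` sub-box, which leaves `6² - 3² = 27` positions.
-/

/-- The integer children of the parent of `I` and of its two neighbours. -/
noncomputable def parentNear (I : ℕ) : Finset ℤ :=
  Finset.Icc (2 * ((I / 2 : ℕ) : ℤ) - 2) (2 * ((I / 2 : ℕ) : ℤ) + 3)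

/-- The integers at distance at most `1` from `I`. -/
noncomputable def indexNear (I : ℕ) : Finset ℤ := Finset.Icc ((I : ℤ) - 1) ((I : ℤ) + 1)

lemma card_parentNear (I : ℕ) : (parentNear I).card = 6 := by
  rw [parentNear, Int.card_Icc]
  omega

lemma card_indexNear (I : ℕ) : (indexNear I).card = 3 := by
  rw [indexNear, Int.card_Icc]
  omega

lemma indexNear_subset_parentNear (I : ℕ) : indexNear I ⊆ parentNear I := by
  intro x hx
  simp only [indexNear, parentNear, Finset.mem_Icc] at hx ⊢
  omega

lemma card_box_sdiff (I₁ I₂ : ℕ) :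
    ((parentNear I₁ ×ˢ parentNear I₂) \ (indexNear I₁ ×ˢ indexNear I₂)).card = 27 := by
  rw [Finset.card_sdiff_of_subset (Finset.product_subset_product
    (indexNear_subset_parentNear I₁) (indexNear_subset_parentNear I₂))]
  simp only [Finset.card_product, card_parentNear, card_indexNear]

/-- each level of the 2D hierarchical splitting is 27-block-sparse: for a
fixed cluster `(I₁,I₂)` at level `ℓ`, at most `27 = 6² − 3²` clusters `(J₁,J₂)` are
admissible (`Chebyshev distance ≥ 2`) while their parents are not (Chebyshev distance
`≤ 1`). -/
theorem hierarchical_splitting_2D_sparsity (ℓ : ℕ) (I₁ I₂ : ℕ)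
    (h1 : I₁ < 2 ^ ℓ) (h2 : I₂ < 2 ^ ℓ) :
    (((Finset.range (2 ^ ℓ)) ×ˢ (Finset.range (2 ^ ℓ))).filter (fun J =>
      2 ≤ max |(I₁ : ℤ) - (J.1 : ℤ)| |(I₂ : ℤ) - (J.2 : ℤ)| ∧
      max |((I₁ / 2 : ℕ) : ℤ) - ((J.1 / 2 : ℕ) : ℤ)|
          |((I₂ / 2 : ℕ) : ℤ) - ((J.2 / 2 : ℕ) : ℤ)| ≤ 1)).card ≤ 27 := by
  rw [← card_box_sdiff I₁ I₂]
  apply Finset.card_le_card_of_injOn (fun J => ((J.1 : ℤ), (J.2 : ℤ)))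
  · rintro ⟨a, b⟩ hJ
    simp only [Finset.coe_filter, Set.mem_ofPred_eq, Finset.mem_product, Finset.mem_range,
      le_max_iff, max_le_iff, abs_le, le_abs] at hJ
    simp only [Finset.mem_coe, Finset.mem_sdiff, Finset.mem_product, parentNear, indexNear,
      Finset.mem_Icc]
    omega
  · rintro ⟨a, b⟩ _ ⟨c, d⟩ _ h
    simpa using h
end
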